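/- arXiv:1003.0529 — 9 statements merged into one kernel-verified Lean document; each statement's English description precedes it below -/
import Mathlib

section
/- For every real ε with 0 ≤ ε ≤ 1/2 and every real x with 0 ≤ x ≤ 0.7, one has sin((1 + 2ε)·x) ≥ (1 + ε)·sin(x). -/
/-!
By concavity of the sine on `[x, 2x] ⊆ [0, π]`, its value at `(1 + t)x` lies above the chord, and
`sin 2x = 2 sin x cos x` makes the chord a multiple of `sin x`. With `t = 2ε` the multiple is at
least `1 + ε` once `cos x ≥ 3/4`. At `ε = 1/2` the inequality reads `sin 2x ≥ (3/2) sin x`, so the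
threshold `arccos (3/4) ≈ 0.7227` is sharp.
-/

theorem one_add_mul_two_mul_cos_sub_one_mul_sin_le {t x : ℝ} (ht0 : 0 ≤ t) (ht1 : t ≤ 1)
    (hx0 : 0 ≤ x) (hx : x ≤ Real.pi / 2) :
    (1 + t * (2 * Real.cos x - 1)) * Real.sin x ≤ Real.sin ((1 + t) * x) := by
  have hx_mem : x ∈ Set.Icc 0 Real.pi := ⟨hx0, by linarith⟩
  have h2x_mem : 2 * x ∈ Set.Icc 0 Real.pi := ⟨by linarith, by linarith⟩
  calc (1 + t * (2 * Real.cos x - 1)) * Real.sin x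
      = (1 - t) * Real.sin x + t * Real.sin (2 * x) := by rw [Real.sin_two_mul]; ring
    _ ≤ Real.sin ((1 - t) * x + t * (2 * x)) :=
      strictConcaveOn_sin_Icc.concaveOn.2 hx_mem h2x_mem (sub_nonneg.2 ht1) ht0
        (sub_add_cancel 1 t)
    _ = Real.sin ((1 + t) * x) := by ring_nf

theorem seven_tenths_le_arccos_three_quarters : (0.7 : ℝ) ≤ Real.arccos (3 / 4) := by
  have hcos : 3 / 4 ≤ Real.cos 0.7 :=
    calc (3 / 4 : ℝ) ≤ 1 - 0.7 ^ 2 / 2 := by norm_num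
      _ ≤ Real.cos 0.7 := Real.one_sub_sq_div_two_le_cos
  calc (0.7 : ℝ) = Real.arccos (Real.cos 0.7) :=
        (Real.arccos_cos (by norm_num) (by linarith [Real.pi_gt_three])).symm
    _ ≤ Real.arccos (3 / 4) := Real.arccos_le_arccos hcos

theorem sin_ge_of_small_angle_general {ε x : ℝ} (hε0 : 0 ≤ ε) (hε : ε ≤ 1 / 2)
    (hx0 : 0 ≤ x) (hx : x ≤ Real.arccos (3 / 4)) :
    (1 + ε) * Real.sin x ≤ Real.sin ((1 + 2 * ε) * x) := by
  have hx_half_pi : x ≤ Real.pi / 2 := hx.trans (Real.arccos_le_pi_div_two.2 (by norm_num))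
  have hsin : 0 ≤ Real.sin x := Real.sin_nonneg_of_nonneg_of_le_pi hx0 (by linarith)
  have hcos : 3 / 4 ≤ Real.cos x :=
    calc (3 / 4 : ℝ) = Real.cos (Real.arccos (3 / 4)) :=
          (Real.cos_arccos (by norm_num) (by norm_num)).symm
      _ ≤ Real.cos x := Real.cos_le_cos_of_nonneg_of_le_pi hx0 (Real.arccos_le_pi _) hx
  calc (1 + ε) * Real.sin x
      = (1 + 2 * ε * (2 * (3 / 4) - 1)) * Real.sin x := by ring
    _ ≤ (1 + 2 * ε * (2 * Real.cos x - 1)) * Real.sin x := by gcongr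
    _ ≤ Real.sin ((1 + 2 * ε) * x) :=
      one_add_mul_two_mul_cos_sub_one_mul_sin_le (by linarith) (by linarith) hx0 hx_half_pi

theorem sin_ge_of_small_angle (ε x : ℝ) (hε0 : 0 ≤ ε) (hε : ε ≤ 1/2)
    (hx0 : 0 ≤ x) (hx : x ≤ 0.7) :
    Real.sin ((1 + 2*ε) * x) ≥ (1 + ε) * Real.sin x :=
  sin_ge_of_small_angle_general hε0 hε hx0 (hx.trans seven_tenths_le_arccos_three_quarters)
end

section
/- For every real ε with 0 ≤ ε ≤ 1/2, the function g_ε : ℝ → ℝ defined by g_ε(x) = (1 − ε)·sin(x) − sin((1 − 2ε)·x) is concave on the interval [0, 0.7]. -/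
/-!
The second derivative of `a sin x - sin (b x)` is `b² sin (b x) - a sin x`. On `[0, π / 2]` the
term `b² sin (b x)` is nonpositive if `-2 ≤ b ≤ 0`, and at most `b² sin x` if `0 ≤ b ≤ 1`, so it is
enough that `a` is at least the square of the positive part of `b`. For `b = 1 - 2 ε` with
`0 ≤ ε ≤ 1` this positive part lies in `[0, 1]`, so its square is at most itself, hence at most
`a = 1 - ε`.
-/

open Real Set

theorem concaveOn_const_mul_sin_sub_sin_const_mul_of_le {a b : ℝ} {D : Set ℝ} (hD : Convex ℝ D)
    (h : ∀ x ∈ interior D, b ^ 2 * sin (b * x) ≤ a * sin x) :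
    ConcaveOn ℝ D (fun x ↦ a * sin x - sin (b * x)) := by
  have hlin (x : ℝ) : HasDerivAt (fun x ↦ b * x) b x := hasDerivAt_const_mul b
  have hderiv (x : ℝ) :
      HasDerivAt (fun x ↦ a * sin x - sin (b * x)) (a * cos x - cos (b * x) * b) x :=
    ((hasDerivAt_sin x).const_mul a).sub (hlin x).sin
  have hderiv2 (x : ℝ) :
      HasDerivAt (fun x ↦ a * cos x - cos (b * x) * b)
        (a * -sin x - -sin (b * x) * b * b) x :=
    ((hasDerivAt_cos x).const_mul a).sub ((hlin x).cos.mul_const b)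
  refine concaveOn_of_hasDerivWithinAt2_nonpos hD
    (fun x _ ↦ (hderiv x).continuousAt.continuousWithinAt)
    (fun x _ ↦ (hderiv x).hasDerivWithinAt) (fun x _ ↦ (hderiv2 x).hasDerivWithinAt)
    fun x hx ↦ ?_
  linarith [h x hx]

theorem sq_mul_sin_mul_le_posPart_sq_mul_sin {b x : ℝ} (hb : b ∈ Icc (-2) 1)
    (hx : x ∈ Icc 0 (π / 2)) : b ^ 2 * sin (b * x) ≤ b⁺ ^ 2 * sin x := by
  obtain ⟨hb_ge, hb_le⟩ := hb
  obtain ⟨hx_nonneg, hx_le⟩ := hx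
  rcases le_total b 0 with hb_nonpos | hb_nonneg
  · have hbx : -π ≤ b * x := by linarith [mul_le_mul_of_nonneg_right hb_ge hx_nonneg]
    have hsin : sin (b * x) ≤ 0 :=
      sin_nonpos_of_nonpos_of_neg_pi_le (mul_nonpos_of_nonpos_of_nonneg hb_nonpos hx_nonneg) hbx
    simpa [posPart_of_nonpos hb_nonpos] using mul_nonpos_of_nonneg_of_nonpos (sq_nonneg b) hsin
  · have hsin : sin (b * x) ≤ sin x :=
      sin_le_sin_of_le_of_le_pi_div_two (by linarith [pi_pos, mul_nonneg hb_nonneg hx_nonneg])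
        hx_le (mul_le_of_le_one_left hx_nonneg hb_le)
    rw [posPart_of_nonneg hb_nonneg]
    gcongr

theorem concaveOn_Icc_const_mul_sin_sub_sin_const_mul {a b : ℝ} (hb : b ∈ Icc (-2) 1)
    (hab : b⁺ ^ 2 ≤ a) :
    ConcaveOn ℝ (Icc 0 (π / 2)) (fun x ↦ a * sin x - sin (b * x)) := by
  refine concaveOn_const_mul_sin_sub_sin_const_mul_of_le (convex_Icc 0 (π / 2)) fun x hx ↦ ?_
  have hx' : x ∈ Icc 0 (π / 2) := interior_subset hx
  have hsin : 0 ≤ sin x := sin_nonneg_of_nonneg_of_le_pi hx'.1 (by linarith [hx'.2, pi_pos])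
  calc b ^ 2 * sin (b * x) ≤ b⁺ ^ 2 * sin x := sq_mul_sin_mul_le_posPart_sq_mul_sin hb hx'
    _ ≤ a * sin x := by gcongr

theorem concave_g_eps_general {ε : ℝ} (hε : ε ∈ Icc 0 1) :
    ConcaveOn ℝ (Icc 0 (π / 2)) (fun x ↦ (1 - ε) * sin x - sin ((1 - 2 * ε) * x)) := by
  obtain ⟨hε0, hε1⟩ := hε
  refine concaveOn_Icc_const_mul_sin_sub_sin_const_mul ⟨by linarith, by linarith⟩ ?_
  have hle : (1 - 2 * ε)⁺ ≤ 1 - ε := sup_le (by linarith) (by linarith)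
  calc (1 - 2 * ε)⁺ ^ 2 ≤ (1 - 2 * ε)⁺ :=
        pow_le_of_le_one (posPart_nonneg _) (by linarith) two_ne_zero
    _ ≤ 1 - ε := hle

theorem concave_g_eps (ε : ℝ) (hε0 : 0 ≤ ε) (hε : ε ≤ 1/2) :
    ConcaveOn ℝ (Set.Icc (0:ℝ) 0.7)
      (fun x : ℝ => (1 - ε) * Real.sin x - Real.sin ((1 - 2*ε) * x)) :=
  (concave_g_eps_general ⟨hε0, by linarith⟩).subset
    (Icc_subset_Icc_right (by linarith [pi_gt_three])) (convex_Icc 0 0.7)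
end

section
/- For every real ε with 0 ≤ ε ≤ 1/2, one has (1 − ε)·sin(0.7) − sin((1 − 2ε)·0.7) ≥ 0. -/
/-!
Since `sin` is concave on `[0, π]`, it lies below its tangent at `x`, which gives
`sin ((1 - 2ε) x) ≤ sin x - 2ε x cos x`. Hence `(1 - ε) sin x - sin ((1 - 2ε) x)` is at least
`ε (2 x cos x - sin x)`, and for `x ≤ π / 3` one has `sin x ≤ x ≤ 2 x cos x`.
-/

lemma le_add_mul_sub_of_concaveOn_of_hasDerivAt {S : Set ℝ} {f : ℝ → ℝ} {f' x y : ℝ}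
    (hf : ConcaveOn ℝ S f) (hx : x ∈ S) (hy : y ∈ S) (hf' : HasDerivAt f f' x) :
    f y ≤ f x + f' * (y - x) := by
  rcases lt_trichotomy x y with hxy | rfl | hyx
  · have slope_le : (f y - f x) / (y - x) ≤ f' := by
      simpa only [slope_def_field] using hf.slope_le_of_hasDerivAt hx hy hxy hf'
    linarith [(div_le_iff₀ (sub_pos.2 hxy)).1 slope_le]
  · simp
  · have le_slope : f' ≤ (f x - f y) / (x - y) := by
      simpa only [slope_def_field] using hf.le_slope_of_hasDerivAt hy hx hyx hf'
    linarith [(le_div_iff₀ (sub_pos.2 hyx)).1 le_slope]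

lemma sin_le_sin_add_cos_mul_sub {x y : ℝ} (hx : x ∈ Set.Icc 0 Real.pi)
    (hy : y ∈ Set.Icc 0 Real.pi) :
    Real.sin y ≤ Real.sin x + Real.cos x * (y - x) :=
  le_add_mul_sub_of_concaveOn_of_hasDerivAt strictConcaveOn_sin_Icc.concaveOn hx hy
    (Real.hasDerivAt_sin x)

lemma sin_le_two_mul_mul_cos {x : ℝ} (hx₀ : 0 ≤ x) (hx : x ≤ Real.pi / 3) :
    Real.sin x ≤ 2 * x * Real.cos x := by
  have half_le_cos : 1 / 2 ≤ Real.cos x := by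
    rw [← Real.cos_pi_div_three]
    exact Real.cos_le_cos_of_nonneg_of_le_pi hx₀ (by linarith [Real.pi_pos]) hx
  calc
    Real.sin x ≤ x := Real.sin_le hx₀
    _ = 2 * x * (1 / 2) := by ring
    _ ≤ 2 * x * Real.cos x := by gcongr

theorem g_eps_boundary_general {x : ℝ} (hx : x ∈ Set.Icc 0 Real.pi)
    (hsin : Real.sin x ≤ 2 * x * Real.cos x) {ε : ℝ} (hε0 : 0 ≤ ε) (hε : ε ≤ 1 / 2) :
    (1 - ε) * Real.sin x - Real.sin ((1 - 2 * ε) * x) ≥ 0 := by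
  obtain ⟨hx₀, hxπ⟩ := hx
  have hy : (1 - 2 * ε) * x ∈ Set.Icc 0 Real.pi :=
    ⟨mul_nonneg (by linarith) hx₀, (mul_le_of_le_one_left hx₀ (by linarith)).trans hxπ⟩
  have tangent := sin_le_sin_add_cos_mul_sub ⟨hx₀, hxπ⟩ hy
  calc
    (1 - ε) * Real.sin x - Real.sin ((1 - 2 * ε) * x)
      ≥ (1 - ε) * Real.sin x - (Real.sin x + Real.cos x * ((1 - 2 * ε) * x - x)) := by gcongr
    _ = ε * (2 * x * Real.cos x - Real.sin x) := by ring
    _ ≥ 0 := mul_nonneg hε0 (sub_nonneg.2 hsin)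

theorem g_eps_boundary (ε : ℝ) (hε0 : 0 ≤ ε) (hε : ε ≤ 1/2) :
    (1 - ε) * Real.sin 0.7 - Real.sin ((1 - 2*ε) * 0.7) ≥ 0 :=
  g_eps_boundary_general ⟨by norm_num, by linarith [Real.pi_gt_three]⟩
    (sin_le_two_mul_mul_cos (by norm_num) (by linarith [Real.pi_gt_three])) hε0 hε
end

section
/- If a and b are nonzero vectors in a real inner product space, then (‖a‖ + ‖b‖)·sin(∠(a, b)/2) ≤ ‖a − b‖. -/
open InnerProductGeometry

theorem norm_sub_sq_eq_mul_sin_half_angle_sq_add_mul_cos_half_angle_sq {E : Type*}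
    [NormedAddCommGroup E] [InnerProductSpace ℝ E] (a b : E) :
    ‖a - b‖ ^ 2 = ((‖a‖ + ‖b‖) * Real.sin (angle a b / 2)) ^ 2 +
      ((‖a‖ - ‖b‖) * Real.cos (angle a b / 2)) ^ 2 := by
  have law_of_cosines :=
    norm_sub_sq_eq_norm_sq_add_norm_sq_sub_two_mul_norm_mul_norm_mul_cos_angle a b
  have cos_angle_eq : Real.cos (angle a b) =
      Real.cos (angle a b / 2) ^ 2 - Real.sin (angle a b / 2) ^ 2 := by
    rw [← Real.cos_two_mul', mul_div_cancel₀ _ two_ne_zero]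
  rw [cos_angle_eq] at law_of_cosines
  linear_combination law_of_cosines -
    (‖a‖ ^ 2 + ‖b‖ ^ 2) * Real.sin_sq_add_cos_sq (angle a b / 2)

theorem sum_norm_mul_sin_half_angle_le {E : Type*} [NormedAddCommGroup E]
    [InnerProductSpace ℝ E] (a b : E) (ha : a ≠ 0) (hb : b ≠ 0) :
    (‖a‖ + ‖b‖) * Real.sin (angle a b / 2) ≤ ‖a - b‖ := by
  refine le_of_sq_le_sq ?_ (norm_nonneg _)
  rw [norm_sub_sq_eq_mul_sin_half_angle_sq_add_mul_cos_half_angle_sq]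
  exact le_add_of_nonneg_right (sq_nonneg _)
end

section
/- Let ε be a real number with 0 < ε < 4. Let y, y' be unit vectors in a real inner product space and let a, b be nonzero vectors (in a possibly different real inner product space) with ‖a‖ ≥ 1 − ε/8, ‖b‖ ≥ 1 − ε/8, and ‖a − b‖ ≤ (1 + ε/8)·‖y − y'‖. Then sin(∠(a, b)/2) ≤ (1 + ε/2)·sin(∠(y, y')/2). -/
open InnerProductGeometry

/-!
Rewriting the law of cosines with the half angle gives
`‖a - b‖² = (‖a‖ - ‖b‖)² + 4 ‖a‖ ‖b‖ sin² (∠(a, b) / 2)`. Dropping the first square bounds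
`2 min ‖a‖ ‖b‖ sin (∠(a, b) / 2)` by `‖a - b‖`, while for vectors of equal norm that square vanishes
and the bound is an equality. Hence a lower bound `m` on `‖a‖` and `‖b‖`, together with a Lipschitz
bound `‖a - b‖ ≤ L ‖y - y'‖`, bounds the ratio of the half-angle sines by `L / m` when `y` and `y'`
are unit vectors. For `L = 1 + ε / 8` and `m = 1 - ε / 8`, this ratio is at most `1 + ε / 2` because
`m (1 + ε / 2) - L = ε (4 - ε) / 16`.
-/

section HalfAngle

variable {V : Type*} [NormedAddCommGroup V] [InnerProductSpace ℝ V]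

theorem sin_half_angle_nonneg (x y : V) : 0 ≤ Real.sin (angle x y / 2) :=
  Real.sin_nonneg_of_nonneg_of_le_pi (by linarith [angle_nonneg x y])
    (by linarith [angle_nonneg x y, angle_le_pi x y])

theorem norm_sub_sq_eq_sq_norm_sub_norm_add_sin_half_angle (x y : V) :
    ‖x - y‖ ^ 2 = (‖x‖ - ‖y‖) ^ 2 + 4 * (‖x‖ * ‖y‖) * Real.sin (angle x y / 2) ^ 2 := by
  have cos_angle_eq : Real.cos (angle x y) = 1 - 2 * Real.sin (angle x y / 2) ^ 2 := by
    rw [← Real.cos_two_mul_eq_one_sub, mul_div_cancel₀ _ two_ne_zero]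
  rw [norm_sub_sq_real, ← cos_angle_mul_norm_mul_norm, cos_angle_eq]
  ring

theorem two_mul_min_norm_mul_sin_half_angle_le_norm_sub (x y : V) :
    2 * min ‖x‖ ‖y‖ * Real.sin (angle x y / 2) ≤ ‖x - y‖ := by
  have min_sq_le : min ‖x‖ ‖y‖ ^ 2 ≤ ‖x‖ * ‖y‖ := by
    rw [sq]
    gcongr
    exacts [min_le_left _ _, min_le_right _ _]
  refine le_of_sq_le_sq ?_ (norm_nonneg _)
  calc (2 * min ‖x‖ ‖y‖ * Real.sin (angle x y / 2)) ^ 2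
      = 4 * min ‖x‖ ‖y‖ ^ 2 * Real.sin (angle x y / 2) ^ 2 := by ring
    _ ≤ 4 * (‖x‖ * ‖y‖) * Real.sin (angle x y / 2) ^ 2 := by gcongr
    _ ≤ (‖x‖ - ‖y‖) ^ 2 + 4 * (‖x‖ * ‖y‖) * Real.sin (angle x y / 2) ^ 2 :=
      le_add_of_nonneg_left (sq_nonneg _)
    _ = ‖x - y‖ ^ 2 := (norm_sub_sq_eq_sq_norm_sub_norm_add_sin_half_angle x y).symm

theorem norm_sub_eq_two_mul_norm_mul_sin_half_angle {x y : V} (h : ‖x‖ = ‖y‖) :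
    ‖x - y‖ = 2 * ‖x‖ * Real.sin (angle x y / 2) := by
  have sin_nonneg := sin_half_angle_nonneg x y
  rw [← sq_eq_sq₀ (norm_nonneg _) (by positivity),
    norm_sub_sq_eq_sq_norm_sub_norm_add_sin_half_angle, ← h]
  ring

end HalfAngle

theorem mul_sin_half_angle_le_of_norm_sub_le
    {E F : Type*} [NormedAddCommGroup E] [InnerProductSpace ℝ E]
    [NormedAddCommGroup F] [InnerProductSpace ℝ F]
    {m L : ℝ} {y y' : E} {a b : F} (hy : ‖y‖ = ‖y'‖) (ha : m ≤ ‖a‖) (hb : m ≤ ‖b‖)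
    (hab : ‖a - b‖ ≤ L * ‖y - y'‖) :
    m * Real.sin (angle a b / 2) ≤ L * (‖y‖ * Real.sin (angle y y' / 2)) := by
  have sin_nonneg := sin_half_angle_nonneg a b
  calc m * Real.sin (angle a b / 2)
      ≤ min ‖a‖ ‖b‖ * Real.sin (angle a b / 2) := by gcongr; exact le_min ha hb
    _ ≤ ‖a - b‖ / 2 := by linarith [two_mul_min_norm_mul_sin_half_angle_le_norm_sub a b]
    _ ≤ L * ‖y - y'‖ / 2 := by gcongr
    _ = L * (‖y‖ * Real.sin (angle y y' / 2)) := by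
      rw [norm_sub_eq_two_mul_norm_mul_sin_half_angle hy]
      ring

theorem sin_half_angle_upper_bound
    {E F : Type*} [NormedAddCommGroup E] [InnerProductSpace ℝ E]
    [NormedAddCommGroup F] [InnerProductSpace ℝ F]
    (ε : ℝ) (hε0 : 0 < ε) (hε4 : ε < 4)
    (y y' : E) (hy : ‖y‖ = 1) (hy' : ‖y'‖ = 1)
    (a b : F) (ha : a ≠ 0) (hb : b ≠ 0)
    (hna : 1 - ε/8 ≤ ‖a‖) (hnb : 1 - ε/8 ≤ ‖b‖)
    (hab : ‖a - b‖ ≤ (1 + ε/8) * ‖y - y'‖) :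
    Real.sin (angle a b / 2) ≤ (1 + ε/2) * Real.sin (angle y y' / 2) := by
  have lower_bound_pos : 0 < 1 - ε / 8 := by linarith
  have constants_le : 1 + ε / 8 ≤ (1 - ε / 8) * (1 + ε / 2) := by
    linarith [mul_pos hε0 (sub_pos.mpr hε4)]
  have sin_nonneg := sin_half_angle_nonneg y y'
  refine le_of_mul_le_mul_left ?_ lower_bound_pos
  calc (1 - ε / 8) * Real.sin (angle a b / 2)
      ≤ (1 + ε / 8) * (‖y‖ * Real.sin (angle y y' / 2)) :=
        mul_sin_half_angle_le_of_norm_sub_le (hy.trans hy'.symm) hna hnb hab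
    _ = (1 + ε / 8) * Real.sin (angle y y' / 2) := by rw [hy, one_mul]
    _ ≤ (1 - ε / 8) * (1 + ε / 2) * Real.sin (angle y y' / 2) := by gcongr
    _ = (1 - ε / 8) * ((1 + ε / 2) * Real.sin (angle y y' / 2)) := mul_assoc _ _ _
end

section
/- Let ε be a real number with 0 < ε ≤ 1/4. Let y, y' be unit vectors in a real inner product space with ‖y − y'‖ ≤ 1/2, and let a, b be nonzero vectors (in a possibly different real inner product space) with ‖a‖ = ‖b‖, 1 − ε/8 ≤ ‖a‖ ≤ 1 + ε/8, and (1 − ε/8)·‖y − y'‖ ≤ ‖a − b‖ ≤ (1 + ε/8)·‖y − y'‖. Then (1 − ε)·∠(y, y') ≤ ∠(a, b) ≤ (1 + ε)·∠(y, y'). -/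
/-!
Vectors of common norm `r` at angle `φ` span a chord of length `2 * r * sin (φ / 2)`. Distorting the
radius and the chord by factors in `[1 - δ, 1 + δ]` therefore changes `sin (φ / 2)` by a relative
error of at most `2 * δ / (1 - δ)`. Half-angles in `[0, θ]` are recovered from their sines with
Lipschitz constant `1 / cos θ`, and `sin (φ / 2) ≤ φ / 2` turns the outcome into a relative error
of the angle. In the short case the half-angles stay below `θ = π / 3`, where `1 / cos θ = 2`, and
the relative error is at most `4 * δ / (1 - δ) ≤ 8 * δ`.
-/

open InnerProductGeometry

section

open Real

theorem cos_mul_abs_sub_le_abs_sin_sub_sin {θ x z : ℝ} (hθ : θ ≤ π) (hx : |x| ≤ θ)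
    (hz : |z| ≤ θ) : cos θ * |x - z| ≤ |sin x - sin z| := by
  wlog hzx : z ≤ x generalizing x z
  · rw [abs_sub_comm x, abs_sub_comm (sin x)]
    exact this hz hx (le_of_not_ge hzx)
  have deriv_ge : ∀ w ∈ interior (Set.Icc (-θ) θ), cos θ ≤ deriv sin w := by
    intro w hw
    rw [Real.deriv_sin, ← cos_abs w]
    exact cos_le_cos_of_nonneg_of_le_pi (abs_nonneg w) hθ
      (abs_le.2 (Set.mem_Icc.1 (interior_subset hw)))
  calc cos θ * |x - z| = cos θ * (x - z) := by rw [abs_of_nonneg (sub_nonneg.2 hzx)]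
    _ ≤ sin x - sin z :=
      (convex_Icc (-θ) θ).mul_sub_le_image_sub_of_le_deriv continuous_sin.continuousOn
        differentiable_sin.differentiableOn deriv_ge z (abs_le.1 hz) x (abs_le.1 hx) hzx
    _ ≤ |sin x - sin z| := le_abs_self _

theorem one_sub_mul_abs_sub_le_of_mul_le_mul {δ s t : ℝ} (hδ : 0 ≤ δ)
    (hst : (1 - δ) * s ≤ (1 + δ) * t) (hts : (1 - δ) * t ≤ (1 + δ) * s) :
    (1 - δ) * |t - s| ≤ 2 * δ * s := by
  rcases le_total s t with h | h
  · rw [abs_of_nonneg (sub_nonneg.2 h)]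
    linarith
  · rw [abs_of_nonpos (sub_nonpos.2 h)]
    linarith [mul_le_mul_of_nonneg_left h hδ]

variable {E F : Type*} [NormedAddCommGroup E] [InnerProductSpace ℝ E]
  [NormedAddCommGroup F] [InnerProductSpace ℝ F]

theorem norm_sub_sq_eq_sq_norm_sub_norm_add_sin_sq_half_angle (a b : E) :
    ‖a - b‖ ^ 2 = (‖a‖ - ‖b‖) ^ 2 + 4 * ‖a‖ * ‖b‖ * sin (angle a b / 2) ^ 2 := by
  have half_angle : cos (angle a b) = 1 - 2 * sin (angle a b / 2) ^ 2 := by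
    rw [sin_sq_eq_half_sub, mul_div_cancel₀ _ two_ne_zero]
    ring
  rw [norm_sub_sq_real, ← cos_angle_mul_norm_mul_norm, half_angle]
  ring

theorem sin_half_angle_nonneg_s10 (a b : E) : 0 ≤ sin (angle a b / 2) :=
  sin_nonneg_of_nonneg_of_le_pi (by linarith [angle_nonneg a b])
    (by linarith [angle_le_pi a b, pi_pos])

theorem norm_sub_eq_two_mul_norm_mul_sin_half_angle_s10 {a b : E} (h : ‖a‖ = ‖b‖) :
    ‖a - b‖ = 2 * ‖a‖ * sin (angle a b / 2) := by
  have sin_nonneg := sin_half_angle_nonneg_s10 a b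
  refine (sq_eq_sq₀ (norm_nonneg _) (by positivity)).1 ?_
  rw [norm_sub_sq_eq_sq_norm_sub_norm_add_sin_sq_half_angle, ← h]
  ring

theorem angle_le_iff_norm_sub_le_two_mul_norm_mul_sin_half {a b : E} (ha : a ≠ 0)
    (h : ‖a‖ = ‖b‖) {θ : ℝ} (hθ₀ : 0 ≤ θ) (hθ : θ ≤ π) :
    angle a b ≤ θ ↔ ‖a - b‖ ≤ 2 * ‖a‖ * sin (θ / 2) := by
  have angle_half_mem : angle a b / 2 ∈ Set.Icc (-(π / 2)) (π / 2) :=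
    ⟨by linarith [angle_nonneg a b, pi_pos], by linarith [angle_le_pi a b]⟩
  have half_mem : θ / 2 ∈ Set.Icc (-(π / 2)) (π / 2) := ⟨by linarith, by linarith⟩
  rw [norm_sub_eq_two_mul_norm_mul_sin_half_angle_s10 h, mul_le_mul_iff_right₀ (by positivity),
    strictMonoOn_sin.le_iff_le angle_half_mem half_mem, div_le_div_iff_of_pos_right two_pos]

theorem angle_le_pi_div_three_of_norm_sub_le_norm {a b : E} (ha : a ≠ 0) (h : ‖a‖ = ‖b‖)
    (hab : ‖a - b‖ ≤ ‖a‖) : angle a b ≤ π / 3 := by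
  rw [angle_le_iff_norm_sub_le_two_mul_norm_mul_sin_half ha h (by positivity)
    (by linarith [pi_pos]), show π / 3 / 2 = π / 6 by ring, sin_pi_div_six]
  linarith

theorem one_sub_mul_abs_sin_half_angle_sub_le {δ : ℝ} (hδ₀ : 0 ≤ δ) {y y' : E} (hy : y ≠ 0)
    (hyy' : ‖y‖ = ‖y'‖) {a b : F} (hab : ‖a‖ = ‖b‖)
    (hlo : (1 - δ) * ‖y‖ ≤ ‖a‖) (hhi : ‖a‖ ≤ (1 + δ) * ‖y‖)
    (hab_lo : (1 - δ) * ‖y - y'‖ ≤ ‖a - b‖) (hab_hi : ‖a - b‖ ≤ (1 + δ) * ‖y - y'‖) :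
    (1 - δ) * |sin (angle a b / 2) - sin (angle y y' / 2)| ≤
      2 * δ * sin (angle y y' / 2) := by
  have two_norm_pos : 0 < 2 * ‖y‖ := by positivity
  have sin_nonneg := sin_half_angle_nonneg_s10 a b
  rw [norm_sub_eq_two_mul_norm_mul_sin_half_angle_s10 hyy',
    norm_sub_eq_two_mul_norm_mul_sin_half_angle_s10 hab] at hab_lo hab_hi
  apply one_sub_mul_abs_sub_le_of_mul_le_mul hδ₀ <;> refine le_of_mul_le_mul_left ?_ two_norm_pos
  · calc 2 * ‖y‖ * ((1 - δ) * sin (angle y y' / 2))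
        = (1 - δ) * (2 * ‖y‖ * sin (angle y y' / 2)) := by ring
      _ ≤ 2 * ‖a‖ * sin (angle a b / 2) := hab_lo
      _ ≤ 2 * ((1 + δ) * ‖y‖) * sin (angle a b / 2) := by gcongr
      _ = 2 * ‖y‖ * ((1 + δ) * sin (angle a b / 2)) := by ring
  · calc 2 * ‖y‖ * ((1 - δ) * sin (angle a b / 2))
        = 2 * ((1 - δ) * ‖y‖) * sin (angle a b / 2) := by ring
      _ ≤ 2 * ‖a‖ * sin (angle a b / 2) := by gcongr
      _ ≤ (1 + δ) * (2 * ‖y‖ * sin (angle y y' / 2)) := hab_hi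
      _ = 2 * ‖y‖ * ((1 + δ) * sin (angle y y' / 2)) := by ring

theorem one_sub_mul_cos_mul_abs_angle_sub_le {δ θ : ℝ} (hδ₀ : 0 ≤ δ) (hδ : δ ≤ 1) (hθ : θ ≤ π)
    {y y' : E} (hy : y ≠ 0) (hyy' : ‖y‖ = ‖y'‖) {a b : F} (hab : ‖a‖ = ‖b‖)
    (hlo : (1 - δ) * ‖y‖ ≤ ‖a‖) (hhi : ‖a‖ ≤ (1 + δ) * ‖y‖)
    (hab_lo : (1 - δ) * ‖y - y'‖ ≤ ‖a - b‖) (hab_hi : ‖a - b‖ ≤ (1 + δ) * ‖y - y'‖)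
    (hyθ : angle y y' / 2 ≤ θ) (haθ : angle a b / 2 ≤ θ) :
    (1 - δ) * (cos θ * |angle a b - angle y y'|) ≤ 2 * δ * angle y y' := by
  have half_y_nonneg : 0 ≤ angle y y' / 2 := div_nonneg (angle_nonneg _ _) two_pos.le
  have half_a_nonneg : 0 ≤ angle a b / 2 := div_nonneg (angle_nonneg _ _) two_pos.le
  have half_angles : (1 - δ) * (cos θ * |angle a b / 2 - angle y y' / 2|) ≤
      2 * δ * (angle y y' / 2) := by
    calc (1 - δ) * (cos θ * |angle a b / 2 - angle y y' / 2|)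
        ≤ (1 - δ) * |sin (angle a b / 2) - sin (angle y y' / 2)| := by
          refine mul_le_mul_of_nonneg_left ?_ (sub_nonneg.2 hδ)
          exact cos_mul_abs_sub_le_abs_sin_sub_sin hθ
            (by rwa [abs_of_nonneg half_a_nonneg]) (by rwa [abs_of_nonneg half_y_nonneg])
      _ ≤ 2 * δ * sin (angle y y' / 2) :=
          one_sub_mul_abs_sin_half_angle_sub_le hδ₀ hy hyy' hab hlo hhi hab_lo hab_hi
      _ ≤ 2 * δ * (angle y y' / 2) := by
          gcongr
          exact sin_le half_y_nonneg
  rw [← sub_div, abs_div, abs_two] at half_angles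
  linarith

theorem short_case_angle_distortion_general {ε : ℝ} (hε₀ : 0 ≤ ε) (hε : ε ≤ 8 / 3)
    {y y' : E} (hy : y ≠ 0) (hnyy' : ‖y‖ = ‖y'‖) (hyy' : ‖y - y'‖ ≤ ‖y‖ / 2)
    {a b : F} (hnab : ‖a‖ = ‖b‖)
    (hlo : (1 - ε / 8) * ‖y‖ ≤ ‖a‖) (hhi : ‖a‖ ≤ (1 + ε / 8) * ‖y‖)
    (hab_lo : (1 - ε / 8) * ‖y - y'‖ ≤ ‖a - b‖)
    (hab_hi : ‖a - b‖ ≤ (1 + ε / 8) * ‖y - y'‖) :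
    (1 - ε) * angle y y' ≤ angle a b ∧ angle a b ≤ (1 + ε) * angle y y' := by
  have y_pos : 0 < ‖y‖ := norm_pos_iff.2 hy
  have ha : a ≠ 0 := norm_pos_iff.1 <| (mul_pos (by linarith) y_pos).trans_le hlo
  have chord_le : ‖a - b‖ ≤ ‖a‖ := by
    calc ‖a - b‖ ≤ (1 + ε / 8) * (‖y‖ / 2) := hab_hi.trans (by gcongr)
      _ = (1 + ε / 8) / 2 * ‖y‖ := by ring
      _ ≤ (1 - ε / 8) * ‖y‖ := by gcongr; linarith
      _ ≤ ‖a‖ := hlo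
  have angle_y_le := angle_le_pi_div_three_of_norm_sub_le_norm hy hnyy' (by linarith)
  have angle_a_le := angle_le_pi_div_three_of_norm_sub_le_norm ha hnab chord_le
  have distortion := one_sub_mul_cos_mul_abs_angle_sub_le (θ := π / 3) (by positivity)
    (by linarith) (by linarith [pi_pos]) hy hnyy' hnab hlo hhi hab_lo hab_hi
    (by linarith [pi_pos]) (by linarith [pi_pos])
  rw [cos_pi_div_three] at distortion
  have abs_sub_le : |angle a b - angle y y'| ≤ ε * angle y y' := by
    have : 1 / 2 * |angle a b - angle y y'| ≤ (1 - ε / 8) * |angle a b - angle y y'| := by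
      gcongr
      linarith
    linarith
  constructor <;> linarith [abs_le.1 abs_sub_le]

end

theorem short_case_angle_distortion
    {E F : Type*} [NormedAddCommGroup E] [InnerProductSpace ℝ E]
    [NormedAddCommGroup F] [InnerProductSpace ℝ F]
    (ε : ℝ) (hε0 : 0 < ε) (hε : ε ≤ 1/4)
    (y y' : E) (hy : ‖y‖ = 1) (hy' : ‖y'‖ = 1) (hyy' : ‖y - y'‖ ≤ 1/2)
    (a b : F) (ha : a ≠ 0) (hb : b ≠ 0)
    (hnab : ‖a‖ = ‖b‖) (hlo : 1 - ε/8 ≤ ‖a‖) (hhi : ‖a‖ ≤ 1 + ε/8)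
    (hab_lo : (1 - ε/8) * ‖y - y'‖ ≤ ‖a - b‖)
    (hab_hi : ‖a - b‖ ≤ (1 + ε/8) * ‖y - y'‖) :
    (1 - ε) * angle y y' ≤ angle a b ∧ angle a b ≤ (1 + ε) * angle y y' :=
  short_case_angle_distortion_general hε0.le (by linarith)
    (norm_ne_zero_iff.1 (hy.trans_ne one_ne_zero)) (hy.trans hy'.symm) (by rwa [hy]) hnab
    (by rwa [hy, mul_one]) (by rwa [hy, mul_one]) hab_lo hab_hi
end

section
/- Let α be a type, let f : α → α → ℝ satisfy f(x, y) = f(y, x) and f(x, x) = 0 for all x, y, let Err : ℝ → ℝ be any function, let n be a natural number, let d : Fin n → Fin n → ℝ satisfy d(j, k) = d(k, j) for all j, k and d(i, i) = 0, let X : Fin n → α be a configuration of points, let i : Fin n, let x' : α, and let X' = Function.update X i x' be the configuration obtained by replacing the i-th point of X by x'. If ∑_{j} Err(f(x', X'(j)) − d(i, j)) < ∑_{j} Err(f(X(i), X(j)) − d(i, j)), then ∑_{j} ∑_{k} Err(f(X'(j), X'(k)) − d(j, k)) < ∑_{j} ∑_{k} Err(f(X(j), X(k)) − d(j, k)). 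-/
/-!
A pair `{i, j}` with `j ≠ i` contributes twice to the symmetric double sum `C`, and both
contributions occur in `C_i`, once each. So `C` equals `2 C_i`, minus the term of the pair `(i, i)`,
plus terms that do not involve the `i`-th point. Moving that point changes only the part `2 C_i`.
-/

namespace MDS

variable {ι α M : Type*} [Fintype ι] [AddCommMonoid M]

section Definitions

variable (w : ι → ι → α → α → M) (X : ι → α) (i : ι)

/-- The total cost `C(X, D)` of a configuration `X`. The weight `w j k x y` is the cost of placing
the points `j` and `k` at `x` and `y`; it is `Err (f x y - d j k)` in multidimensional scaling. -/
def totalCost : M := ∑ j, ∑ k, w j k (X j) (X k)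

/-- The cost `C_i(X, D, x)` attributed to index `i` at position `x`. As in the paper, only the first
argument is replaced by `x`: the term `j = i` still refers to the position `X i`. -/
def pointCost (x : α) : M := ∑ j, w i j x (X j)

/-- The part of the total cost coming from pairs that do not involve index `i`. -/
def costAway [DecidableEq ι] : M := ∑ j ∈ {i}ᶜ, ∑ k ∈ {i}ᶜ, w j k (X j) (X k)

end Definitions

variable [DecidableEq ι]

theorem sum_sum_add_diag_of_symm {A : ι → ι → M} (hA : ∀ j k, A j k = A k j) (i : ι) :
    ∑ j, ∑ k, A j k + A i i = 2 • ∑ k, A i k + ∑ j ∈ {i}ᶜ, ∑ k ∈ {i}ᶜ, A j k := by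
  have row_split (j : ι) : ∑ k, A j k = A j i + ∑ k ∈ {i}ᶜ, A j k :=
    Fintype.sum_eq_add_sum_compl i (A j)
  have column_eq_row : A i i + ∑ j ∈ {i}ᶜ, A j i = ∑ k, A i k := by
    rw [← Fintype.sum_eq_add_sum_compl i fun j ↦ A j i]
    exact Finset.sum_congr rfl fun j _ ↦ hA j i
  calc ∑ j, ∑ k, A j k + A i i
      = ∑ k, A i k + ∑ j ∈ {i}ᶜ, (A j i + ∑ k ∈ {i}ᶜ, A j k) + A i i := by
        rw [Fintype.sum_eq_add_sum_compl i]
        simp only [row_split]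
    _ = ∑ k, A i k + (A i i + ∑ j ∈ {i}ᶜ, A j i) + ∑ j ∈ {i}ᶜ, ∑ k ∈ {i}ᶜ, A j k := by
        rw [Finset.sum_add_distrib]
        abel
    _ = 2 • ∑ k, A i k + ∑ j ∈ {i}ᶜ, ∑ k ∈ {i}ᶜ, A j k := by
        rw [column_eq_row, two_nsmul]

theorem totalCost_add_self {w : ι → ι → α → α → M} (hw : ∀ j k x y, w j k x y = w k j y x)
    (X : ι → α) (i : ι) :
    totalCost w X + w i i (X i) (X i) = 2 • pointCost w X i (X i) + costAway w X i :=
  sum_sum_add_diag_of_symm (fun j k ↦ hw j k (X j) (X k)) i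

theorem costAway_update (w : ι → ι → α → α → M) (X : ι → α) (i : ι) (x : α) :
    costAway w (Function.update X i x) i = costAway w X i := by
  have update_eq {j : ι} (hj : j ∈ ({i}ᶜ : Finset ι)) : Function.update X i x j = X j :=
    Function.update_of_ne (by simpa using hj) x X
  refine Finset.sum_congr rfl fun j hj ↦ Finset.sum_congr rfl fun k hk ↦ ?_
  rw [update_eq hj, update_eq hk]

end MDS

open MDS in
theorem placecenter_cost_decrease_general {ι α M : Type*} [Fintype ι] [DecidableEq ι]
    [AddCommMonoid M] [PartialOrder M] [IsOrderedCancelAddMonoid M]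
    {w : ι → ι → α → α → M} (hw_symm : ∀ j k x y, w j k x y = w k j y x)
    {X : ι → α} {i : ι} {x' : α} (hw_self : w i i x' x' = w i i (X i) (X i))
    (h : pointCost w (Function.update X i x') i x' < pointCost w X i (X i)) :
    totalCost w (Function.update X i x') < totalCost w X := by
  have new_cost : totalCost w (Function.update X i x') + w i i (X i) (X i) =
      2 • pointCost w (Function.update X i x') i x' + costAway w X i := by
    simpa only [Function.update_self, hw_self, costAway_update] using
      totalCost_add_self hw_symm (Function.update X i x') i
  refine lt_of_add_lt_add_right (a := w i i (X i) (X i)) ?_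
  rw [new_cost, totalCost_add_self hw_symm X i]
  gcongr

theorem placecenter_cost_decrease
    {α : Type*} (f : α → α → ℝ)
    (hf_symm : ∀ x y, f x y = f y x) (hf_self : ∀ x, f x x = 0)
    (Err : ℝ → ℝ) (n : ℕ)
    (d : Fin n → Fin n → ℝ)
    (hd_symm : ∀ j k, d j k = d k j) (hd_self : ∀ i, d i i = 0)
    (X : Fin n → α) (i : Fin n) (x' : α)
    (X' : Fin n → α) (hX' : X' = Function.update X i x')
    (h : ∑ j, Err (f x' (X' j) - d i j) < ∑ j, Err (f (X i) (X j) - d i j)) :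
    ∑ j, ∑ k, Err (f (X' j) (X' k) - d j k)
      < ∑ j, ∑ k, Err (f (X j) (X k) - d j k) := by
  subst hX'
  exact placecenter_cost_decrease_general (w := fun j k x y ↦ Err (f x y - d j k))
    (fun j k x y ↦ by rw [hf_symm, hd_symm]) (by simp only [hf_self]) h
end

section
/- Let E be a real normed vector space, let n be a natural number, let x_1, …, x_n ∈ E, let r_1, …, r_n be nonnegative reals, and let Err : ℝ → ℝ be monotone nondecreasing on [0, ∞). Let x, x' ∈ E satisfy x ≠ x_j for all j, and define x̂_j = x_j + (r_j/‖x − x_j‖)·(x − x_j). If ∑_{j=1}^n Err(‖x' − x̂_j‖) ≤ ∑_{j=1}^n Err(‖x − x̂_j‖), then ∑_{j=1}^n Err(|‖x' − x_j‖ − r_j|) ≤ ∑_{j=1}^n Err(|‖x − x_j‖ − r_j|). -/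
/-!
For points `y j` on the spheres of radius `r j` about `c j`, the min-sum objective
`∑ j, err j (dist z (y j))` majorizes the cost at every `z` by the triangle inequality.
The two agree at `x` when each `y j` is a nearest point to `x` on its sphere, so decreasing the
objective from `x` decreases the cost.
-/

open Metric

section Cost

variable {ι X M : Type*} [Fintype ι] [PseudoMetricSpace X] [AddCommMonoid M]

theorem abs_dist_sub_le_dist_of_mem_sphere {c y : X} {r : ℝ} (hy : y ∈ sphere c r) (z : X) :
    |dist z c - r| ≤ dist z y := by
  simpa only [mem_sphere.mp hy] using abs_dist_sub_le z y c

/-- The cost `C(z) = ∑ j, err j |dist z (c j) - r j|` of placing a point at `z` when its distance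
to each `c j` should be `r j`. The error function may depend on the index, as for weighted costs. -/
def placeCost (err : ι → ℝ → M) (c : ι → X) (r : ι → ℝ) (z : X) : M :=
  ∑ j, err j |dist z (c j) - r j|

variable [Preorder M] [IsOrderedAddMonoid M] {err : ι → ℝ → M} {c y : ι → X} {r : ι → ℝ}

theorem placeCost_le_sum_dist (herr : ∀ j, MonotoneOn (err j) (Set.Ici 0))
    (hy : ∀ j, y j ∈ sphere (c j) (r j)) (z : X) :
    placeCost err c r z ≤ ∑ j, err j (dist z (y j)) :=
  Finset.sum_le_sum fun j _ => herr j (Set.mem_Ici.mpr (abs_nonneg _))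
    (Set.mem_Ici.mpr dist_nonneg) (abs_dist_sub_le_dist_of_mem_sphere (hy j) z)

theorem place_cost_decrease_general (herr : ∀ j, MonotoneOn (err j) (Set.Ici 0))
    (hy : ∀ j, y j ∈ sphere (c j) (r j)) {x x' : X}
    (hxy : ∀ j, dist x (y j) = |dist x (c j) - r j|)
    (h : ∑ j, err j (dist x' (y j)) ≤ ∑ j, err j (dist x (y j))) :
    placeCost err c r x' ≤ placeCost err c r x :=
  calc
    placeCost err c r x' ≤ ∑ j, err j (dist x' (y j)) := placeCost_le_sum_dist herr hy x'
    _ ≤ ∑ j, err j (dist x (y j)) := h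
    _ = placeCost err c r x := by simp only [hxy, placeCost]

end Cost

section SphereProj

variable {V P : Type*} [SeminormedAddCommGroup V] [NormedSpace ℝ V] [PseudoMetricSpace P]
  [NormedAddTorsor V P] {c x : P} {r : ℝ}

/-- The point at distance `r` from `c` on the ray from `c` through `x`, which is a nearest point
to `x` on the sphere of radius `r ≥ 0` about `c`. If `dist x c = 0`, division by zero makes it
the center `c`. -/
noncomputable def sphereProj (c : P) (r : ℝ) (x : P) : P :=
  AffineMap.lineMap c x (r / dist x c)

theorem sphereProj_mem_sphere (hr : 0 ≤ r) (hx : dist x c ≠ 0) :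
    sphereProj c r x ∈ sphere c r := by
  rw [mem_sphere, sphereProj, dist_lineMap_left, dist_comm c x,
    Real.norm_of_nonneg (div_nonneg hr dist_nonneg), div_mul_cancel₀ r hx]

theorem dist_sphereProj (hx : dist x c ≠ 0) :
    dist x (sphereProj c r x) = |dist x c - r| :=
  calc
    dist x (sphereProj c r x) = |1 - r / dist x c| * dist x c := by
      rw [sphereProj, dist_right_lineMap, dist_comm c x, Real.norm_eq_abs]
    _ = |(1 - r / dist x c) * dist x c| := by rw [abs_mul, abs_of_nonneg dist_nonneg]
    _ = |dist x c - r| := by rw [sub_mul, one_mul, div_mul_cancel₀ r hx]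

theorem sphereProj_eq_add_smul (c : V) (r : ℝ) (x : V) :
    sphereProj c r x = c + (r / ‖x - c‖) • (x - c) := by
  rw [sphereProj, AffineMap.lineMap_apply_module', dist_eq_norm, add_comm]

end SphereProj

theorem place_cost_decrease
    {E : Type*} [NormedAddCommGroup E] [NormedSpace ℝ E]
    (n : ℕ) (xs : Fin n → E) (r : Fin n → ℝ) (hr : ∀ j, 0 ≤ r j)
    (Err : ℝ → ℝ) (hErr : MonotoneOn Err (Set.Ici (0:ℝ)))
    (x x' : E) (hx : ∀ j, x ≠ xs j)
    (xhat : Fin n → E)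
    (hxhat : ∀ j, xhat j = xs j + (r j / ‖x - xs j‖) • (x - xs j))
    (h : ∑ j, Err ‖x' - xhat j‖ ≤ ∑ j, Err ‖x - xhat j‖) :
    ∑ j, Err |‖x' - xs j‖ - r j| ≤ ∑ j, Err |‖x - xs j‖ - r j| := by
  obtain rfl : xhat = fun j => sphereProj (xs j) (r j) x :=
    funext fun j => (hxhat j).trans (sphereProj_eq_add_smul (xs j) (r j) x).symm
  simp only [← dist_eq_norm] at h ⊢
  exact place_cost_decrease_general (fun _ => hErr)
    (fun j => sphereProj_mem_sphere (hr j) (dist_ne_zero.mpr (hx j)))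
    (fun j => dist_sphereProj (dist_ne_zero.mpr (hx j))) h
end

section
/- There exists an absolute constant C > 0 with the following property. For every real ε with 0 < ε ≤ 1/4, every natural number d, every finite set Y of n ≥ 2 unit vectors in ℝ^{d+1}, and every natural number k with k ≥ C·(1/ε²)·log n, there exists a linear map T : ℝ^{d+1} → ℝ^{k+1} such that T(y) ≠ 0 for all y ∈ Y and, for all y, y' ∈ Y, (1 − ε)·∠(y, y') ≤ ∠(T(y), T(y')) ≤ (1 + ε)·∠(y, y'). Equivalently, mapping each y ∈ Y to the unit vector T(y)/‖T(y)‖ on the sphere S^k embeds Y into S^k so that every pairwise geodesic distance is preserved up to a multiplicative factor of (1 ± ε). -/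
open InnerProductGeometry

/-!
Normalize a matrix with independent standard Gaussian rows so that it preserves squared norms in
expectation. By concentration of the chi-squared distribution and a union bound, some such matrix
`T` nearly preserves the norms of the sums and differences of the vectors in an orthonormal basis
of each of the planes spanned by two points of `Y`. By polarization, `T` then nearly preserves the
norms of all the vectors in these planes.

A map whose restriction to a plane has norm at most `K`, with inverse of norm at most `K'`,
multiplies the squared tangent of half the angle between two vectors of the plane by at most
`(K * K') ^ 2`. As `arctan (κ * x) ≤ κ * arctan x` for `κ ≥ 1`, the angle itself grows by a factor
of at most `K * K'`. Controlling the whole plane, rather than only the distance between the two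
points, is what makes the error relative for angles near `0` and near `π` alike.
-/

open MeasureTheory ProbabilityTheory Real Module
open scoped RealInnerProductSpace

section ChiSquared

lemma neg_log_one_sub_le_add_sq {x : ℝ} (hx : |x| ≤ 1 / 3) : -log (1 - x) ≤ x + x ^ 2 := by
  have taylor := (abs_le.1 (abs_log_sub_add_sum_range_le (hx.trans_lt (by norm_num)) 2)).1
  have remainder : |x| ^ (2 + 1) / (1 - |x|) ≤ x ^ 2 / 2 := by
    rw [div_le_iff₀ (by linarith), ← sq_abs x]
    nlinarith [mul_nonneg (sq_nonneg |x|) (sub_nonneg.2 hx)]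
  norm_num [Finset.sum_range_succ] at taylor remainder
  linarith

lemma gaussianPDFReal_zero_one_mul_exp_mul_sq (t x : ℝ) :
    gaussianPDFReal 0 1 x * exp (t * x ^ 2) = (√(2 * π))⁻¹ * exp (-(1 / 2 - t) * x ^ 2) := by
  rw [gaussianPDFReal_def]
  simp only [NNReal.coe_one, mul_one, sub_zero]
  rw [mul_assoc, ← exp_add]
  congr 2
  ring

lemma mgf_sq_gaussianReal {t : ℝ} (ht : t < 1 / 2) :
    mgf (fun x ↦ x ^ 2) (gaussianReal 0 1) t = (√(1 - 2 * t))⁻¹ := by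
  rw [mgf, integral_gaussianReal_eq_integral_smul one_ne_zero]
  simp only [smul_eq_mul, gaussianPDFReal_zero_one_mul_exp_mul_sq]
  rw [integral_const_mul, integral_gaussian, ← sqrt_inv, ← sqrt_mul (by positivity), ← sqrt_inv]
  have : 1 - 2 * t ≠ 0 := by linarith
  have : 1 / 2 - t ≠ 0 := by linarith
  congr 1
  field_simp

lemma mgf_sq_sub_one_gaussianReal {t : ℝ} (ht : t < 1 / 2) :
    mgf (fun x ↦ x ^ 2 - 1) (gaussianReal 0 1) t = exp (-t) * (√(1 - 2 * t))⁻¹ := by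
  simp_rw [sub_eq_neg_add (_ ^ 2) (1 : ℝ), mgf_const_add, mgf_sq_gaussianReal ht, mul_neg_one]

lemma mgf_sq_sub_one_gaussianReal_le {t : ℝ} (ht : |t| ≤ 1 / 6) :
    mgf (fun x ↦ x ^ 2 - 1) (gaussianReal 0 1) t ≤ exp (2 * t ^ 2) := by
  have ht' : t < 1 / 2 := by linarith [le_abs_self t]
  have hlog := neg_log_one_sub_le_add_sq (x := 2 * t) (by rw [abs_mul, abs_two]; linarith)
  calc mgf (fun x ↦ x ^ 2 - 1) (gaussianReal 0 1) t
      = exp (-t) * (√(1 - 2 * t))⁻¹ := mgf_sq_sub_one_gaussianReal ht'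
    _ = exp (-t + -(log (1 - 2 * t) / 2)) := by
        rw [exp_add, exp_neg (_ / 2), ← log_sqrt (by linarith),
          exp_log (sqrt_pos.2 (by linarith))]
    _ ≤ exp (2 * t ^ 2) := exp_le_exp.2 (by linarith)

variable {Ω ι : Type*} [MeasurableSpace Ω] {P : Measure Ω} [Fintype ι] {X : ι → Ω → ℝ} {t η : ℝ}

lemma mgf_sum_sq_sub_one (hX : ∀ i, HasLaw (X i) (gaussianReal 0 1) P) (hindep : iIndepFun X P) :
    mgf (fun ω ↦ ∑ i, (X i ω ^ 2 - 1)) P t =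
      mgf (fun x ↦ x ^ 2 - 1) (gaussianReal 0 1) t ^ Fintype.card ι := by
  have hmeas : Measurable fun x : ℝ ↦ x ^ 2 - 1 := by fun_prop
  have hlaw (i) : mgf (fun ω ↦ X i ω ^ 2 - 1) P t = mgf (fun x ↦ x ^ 2 - 1) (gaussianReal 0 1) t :=
    (hX i).integral_comp (f := fun x ↦ exp (t * (x ^ 2 - 1))) (by fun_prop)
  have hprod := (hindep.comp (fun _ x ↦ x ^ 2 - 1) fun _ ↦ hmeas).mgf_sum₀ (t := t)
    (fun i ↦ hmeas.comp_aemeasurable (hX i).aemeasurable) Finset.univ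
  simpa only [Finset.sum_fn, Function.comp_def, hlaw, Finset.prod_const, Finset.card_univ]
    using hprod

lemma integrable_exp_mul_sum_sq_sub_one (hX : ∀ i, HasLaw (X i) (gaussianReal 0 1) P)
    (hindep : iIndepFun X P) (ht : t < 1 / 2) :
    Integrable (fun ω ↦ exp (t * ∑ i, (X i ω ^ 2 - 1))) P := by
  refine Integrable.of_integral_ne_zero ?_
  change mgf _ P t ≠ 0
  have hsqrt : 0 < √(1 - 2 * t) := sqrt_pos.2 (by linarith)
  rw [mgf_sum_sq_sub_one hX hindep, mgf_sq_sub_one_gaussianReal ht]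
  positivity

lemma mgf_sum_sq_sub_one_le (hX : ∀ i, HasLaw (X i) (gaussianReal 0 1) P)
    (hindep : iIndepFun X P) (ht : |t| ≤ 1 / 6) :
    mgf (fun ω ↦ ∑ i, (X i ω ^ 2 - 1)) P t ≤ exp (Fintype.card ι * (2 * t ^ 2)) := by
  rw [mgf_sum_sq_sub_one hX hindep, exp_nat_mul]
  exact pow_le_pow_left₀ mgf_nonneg (mgf_sq_sub_one_gaussianReal_le ht) _

lemma measureReal_le_abs_sum_sq_sub_one_le (hX : ∀ i, HasLaw (X i) (gaussianReal 0 1) P)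
    (hindep : iIndepFun X P) (hη₀ : 0 ≤ η) (hη : η ≤ 2 / 3) :
    P.real {ω | Fintype.card ι * η ≤ |∑ i, (X i ω ^ 2 - 1)|} ≤
      2 * exp (-(Fintype.card ι * η ^ 2 / 8)) := by
  have := hindep.isProbabilityMeasure
  set S : Ω → ℝ := fun ω ↦ ∑ i, (X i ω ^ 2 - 1)
  set m : ℝ := (Fintype.card ι : ℝ)
  have hexp : exp (-(m * η ^ 2 / 8)) = exp (-(η / 4) * (m * η)) * exp (m * (2 * (η / 4) ^ 2)) := by
    rw [← exp_add]
    ring_nf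
  have ht : |η / 4| ≤ 1 / 6 := by rw [abs_of_nonneg (by positivity)]; linarith
  have upper : P.real {ω | m * η ≤ S ω} ≤ exp (-(m * η ^ 2 / 8)) := by
    rw [hexp]
    refine (measure_ge_le_exp_mul_mgf _ (by positivity)
      (integrable_exp_mul_sum_sq_sub_one hX hindep (by linarith : η / 4 < 1 / 2))).trans ?_
    gcongr
    exact mgf_sum_sq_sub_one_le hX hindep ht
  have lower : P.real {ω | S ω ≤ -(m * η)} ≤ exp (-(m * η ^ 2 / 8)) := by
    rw [hexp]
    refine (measure_le_le_exp_mul_mgf _ (by linarith)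
      (integrable_exp_mul_sum_sq_sub_one hX hindep (by linarith : -(η / 4) < 1 / 2))).trans ?_
    rw [neg_neg, mul_neg, ← neg_mul]
    gcongr
    rw [← neg_sq (η / 4)]
    exact mgf_sum_sq_sub_one_le hX hindep (by rwa [abs_neg])
  calc P.real {ω | m * η ≤ |S ω|}
      ≤ P.real ({ω | m * η ≤ S ω} ∪ {ω | S ω ≤ -(m * η)}) := by
        refine measureReal_mono fun ω (hω : m * η ≤ |S ω|) ↦ ?_
        exact (le_abs'.1 hω).symm
    _ ≤ _ := (measureReal_union_le _ _).trans (by linarith)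

end ChiSquared

section Angle

lemma arctan_mul_le {κ x : ℝ} (hκ : 1 ≤ κ) (hx : 0 ≤ x) : arctan (κ * x) ≤ κ * arctan x := by
  have hderiv (y : ℝ) : HasDerivAt (fun y ↦ κ * arctan y - arctan (κ * y))
      (κ * (1 / (1 + y ^ 2)) - κ * (1 / (1 + (κ * y) ^ 2))) y :=
    (((hasDerivAt_arctan y).const_mul κ).sub ((hasDerivAt_id' y).const_mul κ).arctan).congr_deriv
      (by ring)
  have hmono : Monotone fun y ↦ κ * arctan y - arctan (κ * y) := by
    refine monotone_of_hasDerivAt_nonneg hderiv fun y ↦ sub_nonneg.2 ?_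
    have hsq : y ^ 2 ≤ (κ * y) ^ 2 := by
      rw [mul_pow]
      exact le_mul_of_one_le_left (sq_nonneg y) (one_le_pow₀ hκ)
    gcongr
  simpa using hmono hx

lemma le_mul_of_sin_mul_cos_le {κ s t : ℝ} (hκ : 1 ≤ κ) (hs : 0 ≤ s) (ht : t ≤ π / 2)
    (h : sin t * cos s ≤ κ * (sin s * cos t)) : t ≤ κ * s := by
  rcases le_or_gt t 0 with ht₀ | ht₀
  · exact ht₀.trans (by positivity)
  rcases le_or_gt (π / 2) s with hs' | hs'
  · exact ht.trans (hs'.trans (le_mul_of_one_le_left hs hκ))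
  have hcos_s : 0 < cos s := cos_pos_of_mem_Ioo ⟨by linarith, hs'⟩
  have ht' : t < π / 2 := by
    refine ht.lt_of_ne ?_
    rintro rfl
    simp only [sin_pi_div_two, cos_pi_div_two, mul_zero, one_mul] at h
    exact h.not_gt hcos_s
  have hcos_t : 0 < cos t := cos_pos_of_mem_Ioo ⟨by linarith, ht'⟩
  have htan : tan t ≤ κ * tan s := by
    rw [tan_eq_sin_div_cos, tan_eq_sin_div_cos, ← mul_div_assoc, div_le_div_iff₀ hcos_t hcos_s]
    linarith
  calc t = arctan (tan t) := (arctan_tan (by linarith) ht').symm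
    _ ≤ arctan (κ * tan s) := arctan_mono htan
    _ ≤ κ * arctan (tan s) := arctan_mul_le hκ (tan_nonneg_of_nonneg_of_le_pi_div_two hs hs'.le)
    _ = κ * s := by rw [arctan_tan (by linarith) hs']

variable {E F : Type*} [NormedAddCommGroup E] [InnerProductSpace ℝ E]
  [NormedAddCommGroup F] [InnerProductSpace ℝ F] {x y : E} {x' y' : F} {K K' : ℝ}

lemma norm_mul_norm_sub_inner (x y : E) :
    ‖x‖ * ‖y‖ - ⟪x, y⟫ = 2 * (‖x‖ * ‖y‖) * sin (angle x y / 2) ^ 2 := by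
  rw [← cos_angle_mul_norm_mul_norm, sin_sq_eq_half_sub, mul_div_cancel₀ _ two_ne_zero]
  ring

lemma norm_mul_norm_add_inner (x y : E) :
    ‖x‖ * ‖y‖ + ⟪x, y⟫ = 2 * (‖x‖ * ‖y‖) * cos (angle x y / 2) ^ 2 := by
  rw [← cos_angle_mul_norm_mul_norm, cos_sq, mul_div_cancel₀ _ two_ne_zero]
  ring

lemma norm_mul_norm_sub_inner_le_of_norm_le (hx : x ≠ 0) (hy : y ≠ 0)
    (h : ∀ a b : ℝ, ‖a • x' + b • y'‖ ≤ K * ‖a • x + b • y‖) :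
    ‖x'‖ * ‖y'‖ - ⟪x', y'⟫ ≤ K ^ 2 * (‖x‖ * ‖y‖ - ⟪x, y⟫) := by
  -- With these weights the two summands on the right have equal norms.
  have hsq := pow_le_pow_left₀ (norm_nonneg _) (h ‖y‖ (-‖x‖)) 2
  simp only [mul_pow, norm_add_sq_real, norm_smul, inner_smul_left, inner_smul_right,
    norm_neg, norm_norm, conj_trivial] at hsq
  have hpos : 0 < 2 * (‖x‖ * ‖y‖) := by positivity
  refine le_of_mul_le_mul_left ?_ hpos
  nlinarith [sq_nonneg (‖y‖ * ‖x'‖ - ‖x‖ * ‖y'‖)]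

lemma norm_mul_norm_add_inner_le_of_norm_le (hx : x ≠ 0) (hy : y ≠ 0)
    (h : ∀ a b : ℝ, ‖a • x' + b • y'‖ ≤ K * ‖a • x + b • y‖) :
    ‖x'‖ * ‖y'‖ + ⟪x', y'⟫ ≤ K ^ 2 * (‖x‖ * ‖y‖ + ⟪x, y⟫) := by
  simpa using norm_mul_norm_sub_inner_le_of_norm_le (y' := -y') hx (neg_ne_zero.2 hy)
    fun a b ↦ by simpa using h a (-b)

-- `tan (angle x y / 2) ^ 2` is the ratio of `‖x‖ * ‖y‖ - ⟪x, y⟫` to `‖x‖ * ‖y‖ + ⟪x, y⟫`.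
theorem angle_le_mul_angle_of_norm_le (hx : x ≠ 0) (hy : y ≠ 0)
    (h : ∀ a b : ℝ, ‖a • x' + b • y'‖ ≤ K * ‖a • x + b • y‖)
    (h' : ∀ a b : ℝ, ‖a • x + b • y‖ ≤ K' * ‖a • x' + b • y'‖) :
    angle x' y' ≤ K * K' * angle x y := by
  have hxx' : ‖x'‖ ≤ K * ‖x‖ := by simpa using h 1 0
  have hx'x : ‖x‖ ≤ K' * ‖x'‖ := by simpa using h' 1 0
  have hy'y : ‖y‖ ≤ K' * ‖y'‖ := by simpa using h' 0 1
  have hx' : x' ≠ 0 := by rintro rfl; simp [hx] at hx'x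
  have hy' : y' ≠ 0 := by rintro rfl; simp [hy] at hy'y
  have hK' : 0 ≤ K' := (pos_of_mul_pos_left ((norm_pos_iff.2 hx).trans_le hx'x) (norm_nonneg x')).le
  have hκ : 1 ≤ K * K' := by
    refine le_of_mul_le_mul_right ?_ (norm_pos_iff.2 hx)
    linarith [mul_le_mul_of_nonneg_left hxx' hK']
  have hsub := norm_mul_norm_sub_inner_le_of_norm_le hx hy h
  have hadd := norm_mul_norm_add_inner_le_of_norm_le hx' hy' h'
  simp only [norm_mul_norm_sub_inner, norm_mul_norm_add_inner] at hsub hadd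
  set s := angle x y / 2 with hs
  set t := angle x' y' / 2 with ht
  have hs₀ : 0 ≤ s := div_nonneg (angle_nonneg _ _) two_pos.le
  have hs₁ : s ≤ π / 2 := by linarith [angle_le_pi x y]
  have ht₀ : 0 ≤ t := div_nonneg (angle_nonneg _ _) two_pos.le
  have ht₁ : t ≤ π / 2 := by linarith [angle_le_pi x' y']
  have hsq : (sin t * cos s) ^ 2 ≤ (K * K' * (sin s * cos t)) ^ 2 := by
    have hpos : 0 < 2 * (‖x‖ * ‖y‖) * (2 * (‖x'‖ * ‖y'‖)) := by positivity
    refine le_of_mul_le_mul_left ?_ hpos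
    linarith [mul_le_mul hsub hadd (by positivity) (by positivity)]
  have htan : sin t * cos s ≤ K * K' * (sin s * cos t) := by
    refine le_of_sq_le_sq hsq (mul_nonneg (zero_le_one.trans hκ) (mul_nonneg ?_ ?_))
    · exact sin_nonneg_of_nonneg_of_le_pi hs₀ (by linarith)
    · exact cos_nonneg_of_neg_pi_div_two_le_of_le (by linarith) ht₁
  have hhalf : t ≤ K * K' * s := le_mul_of_sin_mul_cos_le hκ hs₀ ht₁ htan
  rw [ht, hs] at hhalf
  linarith

end Angle

section AlmostIsometry

variable {E F : Type*} [NormedAddCommGroup E] [InnerProductSpace ℝ E]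
  [NormedAddCommGroup F] [InnerProductSpace ℝ F] {T : E →ₗ[ℝ] F} {δ : ℝ} {x y : E}

/-- `T` is a `δ`-almost isometry on `s` if it distorts the squared norm of each vector of `s` by a
relative error of at most `δ`. On a set of sparse vectors this is the restricted isometry property
of compressed sensing. -/
def IsAlmostIsometryOn (δ : ℝ) (T : E →ₗ[ℝ] F) (s : Set E) : Prop :=
  ∀ x ∈ s, |‖T x‖ ^ 2 - ‖x‖ ^ 2| ≤ δ * ‖x‖ ^ 2

namespace IsAlmostIsometryOn

lemma norm_map_le {s : Set E} (hT : IsAlmostIsometryOn δ T s) (hx : x ∈ s) :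
    ‖T x‖ ≤ √(1 + δ) * ‖x‖ := by
  rw [← sqrt_sq (norm_nonneg x), ← sqrt_mul' _ (sq_nonneg _)]
  refine le_sqrt_of_sq_le ?_
  linarith [(abs_le.1 (hT x hx)).2]

lemma norm_le {s : Set E} (hT : IsAlmostIsometryOn δ T s) (hδ : δ < 1) (hx : x ∈ s) :
    ‖x‖ ≤ (√(1 - δ))⁻¹ * ‖T x‖ := by
  rw [inv_mul_eq_div, le_div_iff₀ (sqrt_pos.2 (sub_pos.2 hδ)), mul_comm,
    ← sqrt_sq (norm_nonneg x), ← sqrt_mul (sub_nonneg.2 hδ.le)]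
  refine (sqrt_le_left (norm_nonneg _)).2 ?_
  linarith [(abs_le.1 (hT x hx)).1]

lemma map_ne_zero {s : Set E} (hT : IsAlmostIsometryOn δ T s) (hδ : δ < 1) (hx : x ∈ s)
    (hx₀ : x ≠ 0) : T x ≠ 0 := by
  intro h
  have := hT.norm_le hδ hx
  simp_all

lemma abs_inner_map_sub_inner_le (hT : IsAlmostIsometryOn δ T {x + y, x - y}) :
    |⟪T x, T y⟫ - ⟪x, y⟫| ≤ δ * ((‖x‖ ^ 2 + ‖y‖ ^ 2) / 2) := by
  have hadd := abs_le.1 (hT (x + y) (by simp))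
  have hsub := abs_le.1 (hT (x - y) (by simp))
  simp only [map_add, map_sub, norm_add_sq_real, norm_sub_sq_real] at hadd hsub
  rw [abs_le]
  constructor <;> linarith

lemma span_range_of_orthonormal {ι : Type*} [Fintype ι] {v : ι → E} (hv : Orthonormal ℝ v)
    (hδ : 0 ≤ δ) (hT : ∀ i j, IsAlmostIsometryOn δ T {v i + v j, v i - v j}) :
    IsAlmostIsometryOn (Fintype.card ι * δ) T (Submodule.span ℝ (Set.range v)) := by
  intro x hx
  obtain ⟨a, rfl⟩ := (Submodule.mem_span_range_iff_exists_fun ℝ).1 hx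
  have hentry (i j) : |⟪T (v i), T (v j)⟫ - ⟪v i, v j⟫| ≤ δ := by
    simpa [hv.norm_eq_one] using (hT i j).abs_inner_map_sub_inner_le
  have hexpand : ‖T (∑ i, a i • v i)‖ ^ 2 - ‖∑ i, a i • v i‖ ^ 2 =
      ∑ i, ∑ j, a i * a j * (⟪T (v i), T (v j)⟫ - ⟪v i, v j⟫) := by
    simp only [← real_inner_self_eq_norm_sq, map_sum, map_smul, sum_inner, inner_sum,
      real_inner_smul_left, real_inner_smul_right, ← Finset.sum_sub_distrib]
    refine Finset.sum_congr rfl fun i _ ↦ Finset.sum_congr rfl fun j _ ↦ ?_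
    rw [real_inner_comm (T (v i)), real_inner_comm (v i)]
    ring
  have hnorm : ‖∑ i, a i • v i‖ ^ 2 = ∑ i, |a i| ^ 2 := by
    rw [← real_inner_self_eq_norm_sq, hv.inner_sum]
    simp [sq]
  calc |‖T (∑ i, a i • v i)‖ ^ 2 - ‖∑ i, a i • v i‖ ^ 2|
      ≤ ∑ i, ∑ j, |a i * a j * (⟪T (v i), T (v j)⟫ - ⟪v i, v j⟫)| := by
        rw [hexpand]
        exact (Finset.abs_sum_le_sum_abs _ _).trans
          (Finset.sum_le_sum fun i _ ↦ Finset.abs_sum_le_sum_abs _ _)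
    _ ≤ ∑ i, ∑ j, |a i| * |a j| * δ := by
        simp_rw [abs_mul]
        gcongr with i _ j _
        exact hentry i j
    _ = δ * (∑ i, |a i|) ^ 2 := by
        rw [sq, Finset.sum_mul_sum, Finset.mul_sum]
        simp_rw [Finset.mul_sum, mul_comm δ]
    _ ≤ δ * (Fintype.card ι * ∑ i, |a i| ^ 2) := by
        gcongr
        exact sq_sum_le_card_mul_sum_sq
    _ = Fintype.card ι * δ * ‖∑ i, a i • v i‖ ^ 2 := by rw [hnorm]; ring

lemma angle_map_le_and_angle_le (hT : IsAlmostIsometryOn δ T (Submodule.span ℝ {x, y}))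
    (hδ : δ < 1) (hx : x ≠ 0) (hy : y ≠ 0) :
    angle (T x) (T y) ≤ √(1 + δ) * (√(1 - δ))⁻¹ * angle x y ∧
      angle x y ≤ √(1 + δ) * (√(1 - δ))⁻¹ * angle (T x) (T y) := by
  have hmem (a b : ℝ) : a • x + b • y ∈ Submodule.span ℝ {x, y} :=
    Submodule.mem_span_pair.2 ⟨a, b, rfl⟩
  have hle (a b : ℝ) : ‖a • T x + b • T y‖ ≤ √(1 + δ) * ‖a • x + b • y‖ := by
    simpa using hT.norm_map_le (hmem a b)
  have hge (a b : ℝ) : ‖a • x + b • y‖ ≤ (√(1 - δ))⁻¹ * ‖a • T x + b • T y‖ := by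
    simpa using hT.norm_le hδ (hmem a b)
  refine ⟨angle_le_mul_angle_of_norm_le hx hy hle hge, ?_⟩
  rw [mul_comm (√(1 + δ))]
  exact angle_le_mul_angle_of_norm_le
    (hT.map_ne_zero hδ (Submodule.subset_span (by simp)) hx)
    (hT.map_ne_zero hδ (Submodule.subset_span (by simp)) hy) hge hle

end IsAlmostIsometryOn

end AlmostIsometry

section GaussianProjection

variable {ι E : Type*} [Fintype ι] [NormedAddCommGroup E] [InnerProductSpace ℝ E]

/-- The linear map whose `i`-th coordinate is the inner product with the row `G i`, scaled by
`1 / √(card ι)`. For independent standard Gaussian rows, this is the random projection of Johnson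
and Lindenstrauss, and the scaling makes it preserve squared norms in expectation. -/
noncomputable def scaledRowMap (G : ι → E) : E →ₗ[ℝ] EuclideanSpace ℝ ι :=
  (√(Fintype.card ι))⁻¹ •
    ((WithLp.linearEquiv 2 ℝ (ι → ℝ)).symm ∘ₗ LinearMap.pi fun i ↦ innerₛₗ ℝ (G i))

lemma norm_scaledRowMap_sq (G : ι → E) (x : E) :
    ‖scaledRowMap G x‖ ^ 2 = (∑ i, ⟪x, G i⟫ ^ 2) / Fintype.card ι := by
  simp [EuclideanSpace.real_norm_sq_eq, scaledRowMap, real_inner_comm, inv_mul_eq_div, div_pow,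
    Finset.sum_div]

lemma norm_scaledRowMap_sq_sub_norm_sq [Nonempty ι] (G : ι → E) (x : E) :
    ‖scaledRowMap G x‖ ^ 2 - ‖x‖ ^ 2 =
      (∑ i, (⟪‖x‖⁻¹ • x, G i⟫ ^ 2 - 1)) / Fintype.card ι * ‖x‖ ^ 2 := by
  rcases eq_or_ne x 0 with rfl | hx
  · simp
  have hx' : ‖x‖ ≠ 0 := norm_ne_zero_iff.2 hx
  simp only [norm_scaledRowMap_sq, real_inner_smul_left, mul_pow, Finset.sum_sub_distrib,
    ← Finset.mul_sum, Finset.sum_const, Finset.card_univ, nsmul_eq_mul, mul_one]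
  field_simp

variable [FiniteDimensional ℝ E] [MeasurableSpace E] [BorelSpace E]

lemma hasLaw_inner_stdGaussian {x : E} (hx : ‖x‖ = 1) :
    HasLaw (fun g ↦ ⟪x, g⟫) (gaussianReal 0 1) (stdGaussian E) where
  aemeasurable := by fun_prop
  map_eq := by
    change (stdGaussian E).map (innerSL ℝ x) = _
    rw [IsGaussian.map_eq_gaussianReal, integral_strongDual_stdGaussian, variance_dual_stdGaussian,
      innerSL_apply_norm, hx]
    simp

lemma measureReal_lt_abs_norm_scaledRowMap_sq_sub_le {η : ℝ} (hη₀ : 0 ≤ η)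
    (hη : η ≤ 2 / 3) (x : E) :
    (Measure.pi fun _ : ι ↦ stdGaussian E).real
        {G | η * ‖x‖ ^ 2 < |‖scaledRowMap G x‖ ^ 2 - ‖x‖ ^ 2|} ≤
      2 * exp (-(Fintype.card ι * η ^ 2 / 8)) := by
  rcases isEmpty_or_nonempty ι
  · simpa using measureReal_le_one.trans one_le_two
  rcases eq_or_ne x 0 with rfl | hx
  · simpa using mul_nonneg zero_le_two (exp_nonneg _)
  set u := ‖x‖⁻¹ • x
  have hu : ‖u‖ = 1 := norm_smul_inv_norm hx
  have hlaw (i : ι) : HasLaw (fun G : ι → E ↦ ⟪u, G i⟫) (gaussianReal 0 1)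
      (Measure.pi fun _ ↦ stdGaussian E) :=
    (hasLaw_inner_stdGaussian hu).comp
      (measurePreserving_eval (fun _ ↦ stdGaussian E) i).hasLaw
  have hindep : iIndepFun (fun i (G : ι → E) ↦ ⟪u, G i⟫) (Measure.pi fun _ ↦ stdGaussian E) :=
    iIndepFun_pi (X := fun _ g ↦ ⟪u, g⟫) fun _ ↦ by fun_prop
  refine (measureReal_mono fun G hG ↦ ?_).trans
    (measureReal_le_abs_sum_sq_sub_one_le hlaw hindep hη₀ hη)
  have hm : (0 : ℝ) < Fintype.card ι := by exact_mod_cast Fintype.card_pos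
  rw [Set.mem_ofPred_eq, norm_scaledRowMap_sq_sub_norm_sq, abs_mul, abs_div, abs_sq,
    Nat.abs_cast] at hG
  exact ((lt_div_iff₀' hm).1 (lt_of_mul_lt_mul_right hG (sq_nonneg _))).le

end GaussianProjection

section JohnsonLindenstrauss

variable {ι E : Type*} [Fintype ι] [NormedAddCommGroup E] [InnerProductSpace ℝ E] {η : ℝ}

lemma exists_isAlmostIsometryOn_finset_of_finiteDimensional [FiniteDimensional ℝ E] (s : Finset E)
    (hη₀ : 0 ≤ η) (hη : η ≤ 2 / 3)
    (hs : s.card * (2 * exp (-(Fintype.card ι * η ^ 2 / 8))) < 1) :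
    ∃ T : E →ₗ[ℝ] EuclideanSpace ℝ ι, IsAlmostIsometryOn η T s := by
  let : MeasurableSpace E := borel E
  have : BorelSpace E := ⟨rfl⟩
  let μ := Measure.pi fun _ : ι ↦ stdGaussian E
  let bad (x : E) : Set (ι → E) := {G | η * ‖x‖ ^ 2 < |‖scaledRowMap G x‖ ^ 2 - ‖x‖ ^ 2|}
  have hbad : μ.real (⋃ x ∈ s, bad x) < 1 := calc
    μ.real (⋃ x ∈ s, bad x) ≤ ∑ x ∈ s, μ.real (bad x) := measureReal_biUnion_finset_le s bad
    _ ≤ s.card • (2 * exp (-(Fintype.card ι * η ^ 2 / 8))) := Finset.sum_le_card_nsmul _ _ _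
        fun x _ ↦ measureReal_lt_abs_norm_scaledRowMap_sq_sub_le hη₀ hη x
    _ < 1 := by rwa [nsmul_eq_mul]
  obtain ⟨G, hG⟩ : ∃ G, G ∉ ⋃ x ∈ s, bad x := by
    by_contra! h
    rw [Set.eq_univ_of_forall h, probReal_univ] at hbad
    exact hbad.false
  refine ⟨scaledRowMap G, fun x hx ↦ not_lt.1 fun hlt ↦ hG ?_⟩
  exact Set.mem_biUnion hx hlt

theorem exists_isAlmostIsometryOn_finset (s : Finset E) (hη₀ : 0 ≤ η) (hη : η ≤ 2 / 3)
    (hs : s.card * (2 * exp (-(Fintype.card ι * η ^ 2 / 8))) < 1) :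
    ∃ T : E →ₗ[ℝ] EuclideanSpace ℝ ι, IsAlmostIsometryOn η T s := by
  classical
  let V := Submodule.span ℝ (s : Set E)
  have hcard : (s.subtype (· ∈ V)).card ≤ s.card := by
    rw [Finset.card_subtype]
    exact Finset.card_filter_le _ _
  obtain ⟨T₀, hT₀⟩ := exists_isAlmostIsometryOn_finset_of_finiteDimensional (ι := ι)
    (s.subtype (· ∈ V)) hη₀ hη (hs.trans_le' (by gcongr))
  obtain ⟨T, hT⟩ := T₀.exists_extend
  refine ⟨T, fun x hx ↦ ?_⟩
  have := hT₀ ⟨x, Submodule.subset_span hx⟩ (by simpa using hx)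
  simpa [← hT] using this

theorem exists_isAlmostIsometryOn_submodules {α : Type*} (s : Finset α) (V : α → Submodule ℝ E)
    [∀ a, FiniteDimensional ℝ (V a)] {r : ℕ} (hV : ∀ a ∈ s, finrank ℝ (V a) ≤ r)
    (hη₀ : 0 ≤ η) (hη : η ≤ 2 / 3)
    (hs : 2 * r ^ 2 * s.card * (2 * exp (-(Fintype.card ι * η ^ 2 / 8))) < 1) :
    ∃ T : E →ₗ[ℝ] EuclideanSpace ℝ ι, ∀ a ∈ s, IsAlmostIsometryOn (r * η) T (V a) := by
  classical
  let b (a : α) : Fin (finrank ℝ (V a)) → E := fun i ↦ stdOrthonormalBasis ℝ (V a) i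
  have hb (a : α) : Orthonormal ℝ (b a) :=
    (stdOrthonormalBasis ℝ (V a)).orthonormal.comp_linearIsometry (V a).subtypeₗᵢ
  have hspan (a : α) : Submodule.span ℝ (Set.range (b a)) = V a := by
    rw [Set.range_comp' Subtype.val, ← (V a).coe_subtype, Submodule.span_image,
      ← OrthonormalBasis.coe_toBasis, Basis.span_eq, Submodule.map_top, Submodule.range_subtype]
  let W (a : α) : Finset E :=
    (Finset.univ : Finset (Fin (finrank ℝ (V a)) × Fin (finrank ℝ (V a)))).biUnion
      fun p ↦ {b a p.1 + b a p.2, b a p.1 - b a p.2}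
  have hW : ∀ a ∈ s, (W a).card ≤ 2 * r ^ 2 := by
    intro a ha
    calc (W a).card ≤ _ * 2 := Finset.card_biUnion_le_card_mul _ _ _ fun p _ ↦ Finset.card_le_two
      _ = 2 * finrank ℝ (V a) ^ 2 := by simp [sq, mul_comm]
      _ ≤ 2 * r ^ 2 := by gcongr; exact hV a ha
  have hcard : ((s.biUnion W).card : ℝ) ≤ 2 * r ^ 2 * s.card := by
    have := Finset.card_biUnion_le_card_mul s W _ hW
    rw [mul_comm] at this
    exact_mod_cast this
  obtain ⟨T, hT⟩ := exists_isAlmostIsometryOn_finset (ι := ι) (s.biUnion W) hη₀ hη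
    (hs.trans_le' (by gcongr))
  refine ⟨T, fun a ha ↦ ?_⟩
  have hVa : IsAlmostIsometryOn (finrank ℝ (V a) * η) T (V a) := by
    have hpair (i j) : IsAlmostIsometryOn η T {b a i + b a j, b a i - b a j} := by
      refine fun x hx ↦ hT x ?_
      simp only [Finset.coe_biUnion, Set.mem_iUnion, W]
      exact ⟨a, ha, (i, j), by simp, by simpa using hx⟩
    simpa only [hspan, Fintype.card_fin] using
      IsAlmostIsometryOn.span_range_of_orthonormal (hb a) hη₀ hpair
  intro x hx
  refine (hVa x hx).trans ?_
  gcongr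
  exact hV a ha

theorem exists_isAlmostIsometryOn_span_pair (s : Finset E) (hη₀ : 0 ≤ η) (hη : η ≤ 2 / 3)
    (hs : 16 * (s.card : ℝ) ^ 2 * exp (-(Fintype.card ι * η ^ 2 / 8)) < 1) :
    ∃ T : E →ₗ[ℝ] EuclideanSpace ℝ ι, ∀ x ∈ s, ∀ y ∈ s,
      IsAlmostIsometryOn (2 * η) T (Submodule.span ℝ {x, y}) := by
  have (p : E × E) : FiniteDimensional ℝ (Submodule.span ℝ {p.1, p.2}) :=
    FiniteDimensional.span_of_finite ℝ (Set.toFinite _)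
  have hdim (p : E × E) : finrank ℝ (Submodule.span ℝ {p.1, p.2}) ≤ 2 := by
    classical
    rw [← Finset.coe_pair]
    exact (finrank_span_finset_le_card _).trans Finset.card_le_two
  have hcard : 2 * (2 : ℕ) ^ 2 * (s ×ˢ s).card * (2 * exp (-(Fintype.card ι * η ^ 2 / 8))) < 1 := by
    rw [Finset.card_product]
    push_cast
    linarith
  obtain ⟨T, hT⟩ := exists_isAlmostIsometryOn_submodules (s ×ˢ s)
    (fun p ↦ Submodule.span ℝ {p.1, p.2}) (fun p _ ↦ hdim p) hη₀ hη hcard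
  exact ⟨T, fun x hx y hy ↦ hT (x, y) (Finset.mk_mem_product hx hy)⟩

end JohnsonLindenstrauss

section Sphere

lemma sqrt_one_add_half_mul_inv_sqrt_one_sub_half_le {ε : ℝ} (hε₀ : 0 ≤ ε) (hε : ε ≤ 1) :
    √(1 + ε / 2) * (√(1 - ε / 2))⁻¹ ≤ 1 + ε := by
  rw [← sqrt_inv, ← sqrt_mul (by linarith), sqrt_le_left (by linarith), ← div_eq_mul_inv,
    div_le_iff₀ (by linarith)]
  nlinarith [mul_nonneg hε₀ (mul_nonneg hε₀ (sub_nonneg.2 hε))]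

-- `768 = 6 * 8 * 4 ^ 2`, where the `6` comes from `16 * n ^ 2 ≤ n ^ 6`.
lemma sixteen_mul_sq_mul_exp_lt_one {n : ℕ} {m ε : ℝ} (hε : 0 < ε) (hn : 2 ≤ n)
    (hm : 768 * (1 / ε ^ 2) * log n < m) :
    16 * (n : ℝ) ^ 2 * exp (-(m * (ε / 4) ^ 2 / 8)) < 1 := by
  have hn' : (2 : ℝ) ≤ n := by exact_mod_cast hn
  have hpow : 16 * (n : ℝ) ^ 2 ≤ (n : ℝ) ^ 6 := calc
    16 * (n : ℝ) ^ 2 = 2 ^ 4 * (n : ℝ) ^ 2 := by norm_num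
    _ ≤ (n : ℝ) ^ 4 * (n : ℝ) ^ 2 := by gcongr
    _ = (n : ℝ) ^ 6 := by ring
  have hlog_pow : log ((n : ℝ) ^ 6) = 6 * log n := by simp
  have hlog : 6 * log n < m * (ε / 4) ^ 2 / 8 := calc
    6 * log n = 768 * (1 / ε ^ 2) * log n * (ε / 4) ^ 2 / 8 := by field_simp; ring
    _ < m * (ε / 4) ^ 2 / 8 := by gcongr
  calc 16 * (n : ℝ) ^ 2 * exp (-(m * (ε / 4) ^ 2 / 8))
      ≤ (n : ℝ) ^ 6 * exp (-(m * (ε / 4) ^ 2 / 8)) := by gcongr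
    _ = exp (6 * log n + -(m * (ε / 4) ^ 2 / 8)) := by
        rw [exp_add, ← hlog_pow, exp_log (by positivity)]
    _ < 1 := by rw [exp_lt_one_iff]; linarith

theorem spherical_johnson_lindenstrauss_general {ι E : Type*} [Fintype ι] [NormedAddCommGroup E]
    [InnerProductSpace ℝ E] {ε : ℝ} (hε₀ : 0 < ε) (hε : ε ≤ 1) (Y : Finset E)
    (hY₀ : ∀ y ∈ Y, y ≠ 0) (hY : 2 ≤ Y.card)
    (hι : 768 * (1 / ε ^ 2) * log Y.card < Fintype.card ι) :
    ∃ T : E →ₗ[ℝ] EuclideanSpace ℝ ι, (∀ y ∈ Y, T y ≠ 0) ∧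
      ∀ y ∈ Y, ∀ y' ∈ Y, (1 - ε) * angle y y' ≤ angle (T y) (T y') ∧
        angle (T y) (T y') ≤ (1 + ε) * angle y y' := by
  obtain ⟨T, hT⟩ := exists_isAlmostIsometryOn_span_pair (ι := ι) Y
    (by positivity : 0 ≤ ε / 4) (by linarith) (sixteen_mul_sq_mul_exp_lt_one hε₀ hY hι)
  rw [show 2 * (ε / 4) = ε / 2 by ring] at hT
  have hε' : ε / 2 < 1 := by linarith
  refine ⟨T, fun y hy ↦ ?_, fun y hy y' hy' ↦ ?_⟩
  · exact (hT y hy y hy).map_ne_zero hε' (Submodule.subset_span (by simp)) (hY₀ y hy)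
  obtain ⟨hle, hge⟩ := (hT y hy y' hy').angle_map_le_and_angle_le hε' (hY₀ y hy) (hY₀ y' hy')
  have hκ := sqrt_one_add_half_mul_inv_sqrt_one_sub_half_le hε₀.le hε
  constructor
  · calc (1 - ε) * angle y y'
        ≤ (1 - ε) * ((1 + ε) * angle (T y) (T y')) := by
          refine mul_le_mul_of_nonneg_left ?_ (sub_nonneg.2 hε)
          exact hge.trans (mul_le_mul_of_nonneg_right hκ (angle_nonneg _ _))
      _ ≤ angle (T y) (T y') := by nlinarith [mul_nonneg (sq_nonneg ε) (angle_nonneg (T y) (T y'))]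
  · exact hle.trans (mul_le_mul_of_nonneg_right hκ (angle_nonneg _ _))

end Sphere

theorem spherical_johnson_lindenstrauss :
    ∃ C : ℝ, 0 < C ∧
      ∀ (ε : ℝ), 0 < ε → ε ≤ 1/4 →
      ∀ (d : ℕ) (Y : Finset (EuclideanSpace ℝ (Fin (d + 1)))),
        (∀ y ∈ Y, ‖y‖ = 1) → 2 ≤ Y.card →
      ∀ (k : ℕ), C * (1 / ε ^ 2) * Real.log Y.card ≤ k →
      ∃ T : EuclideanSpace ℝ (Fin (d + 1)) →ₗ[ℝ] EuclideanSpace ℝ (Fin (k + 1)),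
        (∀ y ∈ Y, T y ≠ 0) ∧
        ∀ y ∈ Y, ∀ y' ∈ Y,
          (1 - ε) * angle y y' ≤ angle (T y) (T y') ∧
          angle (T y) (T y') ≤ (1 + ε) * angle y y' := by
  refine ⟨768, by norm_num, fun ε hε₀ hε d Y hY hcard k hk ↦ ?_⟩
  exact spherical_johnson_lindenstrauss_general hε₀ (by linarith) Y
    (fun y hy ↦ norm_ne_zero_iff.1 (by simp [hY y hy])) hcard
    (hk.trans_lt (by simp))
end
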